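/- Let x¹, x² : ℝ × ℝ → ℝ be smooth functions with x¹(z,t) > 0 for all z ∈ [0,1], t ≥ 0, and let u : ℝ → ℝ be a function such that for all z ∈ (0,1), t ≥ 0: ∂t x¹(z,t) = x¹(z,t)·x²(z,t)·∂z² x¹(z,t) + u(t) and ∂t x²(z,t) = ∂z x²(z,t) − (x²(z,t))²·∂z² x¹(z,t) + (x²(z,t)/x¹(z,t))·(∂z x¹(z,t) − u(t)), with the boundary conditions ∂z x¹(0,t) = 0, x¹(0,t)·x²(0,t) = 1, and ∂z x¹(1,t) = 0 for all t ≥ 0. Then for every ε ≥ 0 the functions x̄¹(z,t) = x¹(z,t) + ε and x̄²(z,t) = x¹(z,t)·x²(z,t)/(x¹(z,t) + ε) satisfy the same PDEs with the same input u, satisfy the same boundary conditions ∂z x̄¹(0,t) = 0, x̄¹(0,t)·x̄²(0,t) = 1, ∂z x̄¹(1,t) = 0, and produce the identical output ∂z x̄¹(1/2,t) = ∂z x¹(1/2,t) for all t ≥ 0; moreover, if ε ≠ 0 the initial conditions differ, i.e. x̄¹(z,0) ≠ x¹(z,0) for every z ∈ [0,1]. -/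

import Mathlib

/-!
The product `w = x¹ x²` is invariant under the transformation, and the two PDEs together say that
it is transported: `∂t w = ∂z w`. The first transformed equation is then the original one, since
`x̄¹ x̄² = w` and `x̄¹` has the same derivatives as `x¹`. For the second, the quotient rule applied to
`x̄² = w / x̄¹` gives `∂t x̄² - ∂z x̄² = -(w / x̄¹²) (∂t x¹ - ∂z x¹)`, in which `∂t x¹ = w ∂z² x¹ + u`.
-/

/-- Partial derivative with respect to the second (time) variable. -/
noncomputable def pt (f : ℝ × ℝ → ℝ) (z t : ℝ) : ℝ := deriv (fun s => f (z, s)) t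

/-- Partial derivative with respect to the first (spatial) variable. -/
noncomputable def pz (f : ℝ × ℝ → ℝ) (z t : ℝ) : ℝ := deriv (fun w => f (w, t)) z

/-- Second partial derivative with respect to the first (spatial) variable. -/
noncomputable def pzz (f : ℝ × ℝ → ℝ) (z t : ℝ) : ℝ := pz (fun p => pz f p.1 p.2) z t

lemma pz_add_const (f : ℝ × ℝ → ℝ) (c z t : ℝ) : pz (fun p => f p + c) z t = pz f z t := by
  simp [pz]

lemma pt_add_const (f : ℝ × ℝ → ℝ) (c z t : ℝ) : pt (fun p => f p + c) z t = pt f z t := by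
  simp [pt]

lemma pzz_add_const (f : ℝ × ℝ → ℝ) (c z t : ℝ) : pzz (fun p => f p + c) z t = pzz f z t := by
  simp only [pzz, pz_add_const]

/-- The one-variable derivative behind both partial derivatives of `x¹ x² / (x¹ + ε)`. -/
lemma deriv_mul_div_add_const {a b : ℝ → ℝ} {s c : ℝ} (ha : DifferentiableAt ℝ a s)
    (hb : DifferentiableAt ℝ b s) (h : a s + c ≠ 0) :
    deriv (fun r => a r * b r / (a r + c)) s
      = ((deriv a s * b s + a s * deriv b s) * (a s + c) - a s * b s * deriv a s)
        / (a s + c) ^ 2 :=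
  ((ha.hasDerivAt.mul hb.hasDerivAt).div (ha.hasDerivAt.add_const c) h).deriv

/-- The symmetry group (x¹, x²) ↦ (x¹ + ε, x¹x²/(x¹ + ε)) maps solutions of the academic
nonlinear system to solutions with the same input, the same boundary conditions, and the same
output ∂z x¹(1/2,t), but (for ε ≠ 0) different initial conditions. -/
theorem statement4 (x1 x2 : ℝ × ℝ → ℝ) (u : ℝ → ℝ)
    (hx1 : ContDiff ℝ (⊤ : ℕ∞) x1) (hx2 : ContDiff ℝ (⊤ : ℕ∞) x2)
    (hpos : ∀ z ∈ Set.Icc (0:ℝ) 1, ∀ t : ℝ, 0 ≤ t → 0 < x1 (z, t))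
    (hpde1 : ∀ z ∈ Set.Ioo (0:ℝ) 1, ∀ t : ℝ, 0 ≤ t →
        pt x1 z t = x1 (z, t) * x2 (z, t) * pzz x1 z t + u t)
    (hpde2 : ∀ z ∈ Set.Ioo (0:ℝ) 1, ∀ t : ℝ, 0 ≤ t →
        pt x2 z t = pz x2 z t - (x2 (z, t))^2 * pzz x1 z t
          + (x2 (z, t) / x1 (z, t)) * (pz x1 z t - u t))
    (hbc01 : ∀ t : ℝ, 0 ≤ t → pz x1 0 t = 0)
    (hbc02 : ∀ t : ℝ, 0 ≤ t → x1 (0, t) * x2 (0, t) = 1)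
    (hbc1 : ∀ t : ℝ, 0 ≤ t → pz x1 1 t = 0)
    (ε : ℝ) (hε : 0 ≤ ε) :
    (∀ z ∈ Set.Ioo (0:ℝ) 1, ∀ t : ℝ, 0 ≤ t →
        pt (fun p => x1 p + ε) z t
          = (x1 (z, t) + ε) * (x1 (z, t) * x2 (z, t) / (x1 (z, t) + ε))
              * pzz (fun p => x1 p + ε) z t + u t) ∧
    (∀ z ∈ Set.Ioo (0:ℝ) 1, ∀ t : ℝ, 0 ≤ t →
        pt (fun p => x1 p * x2 p / (x1 p + ε)) z t
          = pz (fun p => x1 p * x2 p / (x1 p + ε)) z t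
            - (x1 (z, t) * x2 (z, t) / (x1 (z, t) + ε))^2 * pzz (fun p => x1 p + ε) z t
            + ((x1 (z, t) * x2 (z, t) / (x1 (z, t) + ε)) / (x1 (z, t) + ε))
              * (pz (fun p => x1 p + ε) z t - u t)) ∧
    (∀ t : ℝ, 0 ≤ t → pz (fun p => x1 p + ε) 0 t = 0) ∧
    (∀ t : ℝ, 0 ≤ t →
        (x1 (0, t) + ε) * (x1 (0, t) * x2 (0, t) / (x1 (0, t) + ε)) = 1) ∧
    (∀ t : ℝ, 0 ≤ t → pz (fun p => x1 p + ε) 1 t = 0) ∧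
    (∀ t : ℝ, 0 ≤ t → pz (fun p => x1 p + ε) (1/2) t = pz x1 (1/2) t) ∧
    (ε ≠ 0 → ∀ z ∈ Set.Icc (0:ℝ) 1, x1 (z, 0) + ε ≠ x1 (z, 0)) := by
  have hd1 : Differentiable ℝ x1 := hx1.differentiable (by simp)
  have hd2 : Differentiable ℝ x2 := hx2.differentiable (by simp)
  have hne : ∀ z ∈ Set.Icc (0:ℝ) 1, ∀ t : ℝ, 0 ≤ t → x1 (z, t) + ε ≠ 0 := fun z hz t ht =>
    (add_pos_of_pos_of_nonneg (hpos z hz t ht) hε).ne'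
  simp only [pz_add_const, pt_add_const, pzz_add_const]
  refine ⟨fun z hz t ht => ?_, fun z hz t ht => ?_, hbc01, fun t ht => ?_, hbc1,
    fun _ _ => trivial, fun h z _ => by simpa using h⟩
  · rw [mul_div_cancel₀ _ (hne z (Set.Ioo_subset_Icc_self hz) t ht)]
    exact hpde1 z hz t ht
  · have hz' := Set.Ioo_subset_Icc_self hz
    have h0 : x1 (z, t) ≠ 0 := (hpos z hz' t ht).ne'
    have h1 := hne z hz' t ht
    have e1 := hpde1 z hz t ht
    have e2 := hpde2 z hz t ht
    have et : pt (fun p => x1 p * x2 p / (x1 p + ε)) z t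
        = ((pt x1 z t * x2 (z, t) + x1 (z, t) * pt x2 z t) * (x1 (z, t) + ε)
          - x1 (z, t) * x2 (z, t) * pt x1 z t) / (x1 (z, t) + ε) ^ 2 :=
      deriv_mul_div_add_const (a := fun s => x1 (z, s)) (b := fun s => x2 (z, s))
        (by fun_prop) (by fun_prop) h1
    have ez : pz (fun p => x1 p * x2 p / (x1 p + ε)) z t
        = ((pz x1 z t * x2 (z, t) + x1 (z, t) * pz x2 z t) * (x1 (z, t) + ε)
          - x1 (z, t) * x2 (z, t) * pz x1 z t) / (x1 (z, t) + ε) ^ 2 :=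
      deriv_mul_div_add_const (a := fun w => x1 (w, t)) (b := fun w => x2 (w, t))
        (by fun_prop) (by fun_prop) h1
    -- the transport equation `∂t (x¹ x²) = ∂z (x¹ x²)`
    have hw : pt x1 z t * x2 (z, t) + x1 (z, t) * pt x2 z t
        = pz x1 z t * x2 (z, t) + x1 (z, t) * pz x2 z t := by
      rw [e1, e2]
      field_simp
      ring
    rw [et, ez, hw, e1]
    field_simp
    ring
  · rw [mul_div_cancel₀ _ (hne 0 (by simp) t ht)]
    exact hbc02 t ht
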